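/- Every 2-coloring of a complete linear r-graph on n vertices, for r ≥ 4, k ≥ 3 and n sufficiently large (n > n₀(r,k)), contains k hyperedges all of the same color spanned by at most (r-2)k + 3 vertices. -/

import Mathlib

/-!
Fix an edge `g` and let `G` be the family of the other edges of the colour of `g` that meet `g`.
Each `f ∈ G` has at most `r - 1` vertices outside `g`, so for `H ⊆ G` the edges of `{g} ∪ H` span
at most `r + |⋃_{f ∈ H} (f \ g)|` vertices. It is therefore enough to find `H ⊆ G` with `k - 1`
members and `|⋃_{f ∈ H} (f \ g)| ≤ (r - 2)(k - 1) + 1`.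

* `exists_subfamily_card_biUnion_le`: such an `H` exists as soon as
  `|⋃_{f ∈ G} (f \ g)| + (r - 2)(k - 1) ≤ (r - 2)|G|`. If greedy growth inside `G` gets stuck
  before `k - 1` members, the part built so far is disjoint from the rest and may be discarded,
  which only strengthens the hypothesis on what is left.
* `exists_many_neighbours`: some `g` satisfies `n + (r - 2)(k - 1) ≤ (r - 2)|G|`. Writing `D x` for
  the degree of `x` and `d i x` for its degree in colour `i`, the inequality
  `D x ^ 2 ≤ 2 * ∑ i, d i x ^ 2` shows that the average of `|G|` over all edges is about
  `r D / 2` with `D = (n - 1) / (r - 1)`, and `r (r - 2) / (2 (r - 1)) > 1` because `r ≥ 4`.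
-/

/-- In a finite family of sets `A f` of size at most `s + 1` whose union is much smaller than
`s * |G|`, some `j` members have a union of size at most `s * j + 1`. -/
lemma exists_subfamily_card_biUnion_le {ι V : Type*} [DecidableEq ι] [DecidableEq V]
    (A : ι → Finset V) (s j : ℕ) (hs : 0 < s) (G : Finset ι)
    (hA : ∀ f ∈ G, (A f).card ≤ s + 1)
    (hG : (G.biUnion A).card + s * j ≤ s * G.card) :
    ∃ H ⊆ G, H.card = j ∧ (H.biUnion A).card ≤ s * j + 1 := by
  induction G using Finset.strongInduction with
  | H G ih =>
  have hjG : j ≤ G.card := Nat.le_of_mul_le_mul_left (by omega) hs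
  obtain ⟨H, hH, hmax⟩ := Finset.exists_max_image
    (G.powerset.filter fun H => H.card ≤ j ∧ (H.biUnion A).card ≤ s * H.card + 1)
    Finset.card ⟨∅, by simp⟩
  simp only [Finset.mem_filter, Finset.mem_powerset] at hH hmax
  obtain ⟨hHG, hHj, hHu⟩ := hH
  rcases hHj.eq_or_lt with h | h
  · exact ⟨H, hHG, h, h ▸ hHu⟩
  -- By maximality, adding any member of `G` to `H` breaks the bound on the union.
  have hadd : ∀ f ∈ G, f ∉ H → s * (H.card + 1) + 1 < (A f ∪ H.biUnion A).card := by
    intro f hf hfH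
    by_contra! hc
    have := hmax (insert f H) ⟨Finset.insert_subset hf hHG, by
      rw [Finset.card_insert_of_notMem hfH]; omega, by
      rwa [Finset.card_insert_of_notMem hfH, Finset.biUnion_insert]⟩
    rw [Finset.card_insert_of_notMem hfH] at this
    omega
  have hdisj : ∀ f ∈ G, f ∉ H → Disjoint (A f) (H.biUnion A) := by
    intro f hf hfH
    rw [Finset.disjoint_iff_inter_eq_empty, ← Finset.card_eq_zero]
    have h1 := hadd f hf hfH
    have h2 := Finset.card_union_add_card_inter (A f) (H.biUnion A)
    have h3 := hA f hf
    rw [mul_add] at h1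
    omega
  obtain ⟨f, hf, hfH⟩ := Finset.exists_mem_notMem_of_card_lt_card (h.trans_le hjG)
  have hu : (H.biUnion A).card = s * H.card + 1 := by
    have h1 := hadd f hf hfH
    have h2 := Finset.card_union_le (A f) (H.biUnion A)
    have h3 := hA f hf
    rw [mul_add] at h1
    omega
  have hne : H.Nonempty := by
    rw [Finset.nonempty_iff_ne_empty]
    rintro rfl
    simp at hu
  have hunion : (G.biUnion A).card = ((G \ H).biUnion A).card + (H.biUnion A).card := by
    rw [← Finset.card_union_of_disjoint, ← Finset.union_biUnion, Finset.sdiff_union_of_subset hHG]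
    rw [Finset.disjoint_biUnion_left]
    intro f hf
    exact hdisj f (Finset.mem_sdiff.1 hf).1 (Finset.mem_sdiff.1 hf).2
  have hcard : (G \ H).card + H.card = G.card := Finset.card_sdiff_add_card_eq_card hHG
  obtain ⟨K, hK, h1, h2⟩ := ih (G \ H) (Finset.sdiff_ssubset hHG hne)
    (fun f hf => hA f (Finset.mem_sdiff.1 hf).1) (by
      rw [← hcard, mul_add] at hG
      omega)
  exact ⟨K, hK.trans Finset.sdiff_subset, h1, h2⟩

/-- With `r = q + 2` and `m` the number of other edges that have the colour of `g` and meet it,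
some edge `g` satisfies `n + (r - 2) * k ≤ (r - 2) * m`, provided `n` is large in terms of `r`
and `k`. -/
lemma exists_many_neighbours (q k : ℕ) (hq : 2 ≤ q) {V : Type} [DecidableEq V] [Fintype V]
    (hn : 1 + (q + 1) * (1 + q * (k + (q + 2))) < Fintype.card V) (𝒢 : Finset (Finset V))
    (hr : ∀ S ∈ 𝒢, S.card = q + 2)
    (hlin : ∀ S ∈ 𝒢, ∀ T ∈ 𝒢, S ≠ T → (S ∩ T).card ≤ 1)
    (hcov : ∀ u v : V, u ≠ v → ∃ e ∈ 𝒢, u ∈ e ∧ v ∈ e)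
    (col : Finset V → Fin 2) :
    ∃ g ∈ 𝒢, Fintype.card V + q * k ≤
      q * (𝒢.filter fun f => f ≠ g ∧ col f = col g ∧ (f ∩ g).Nonempty).card := by
  by_contra! hcon
  set n := Fintype.card V with hndef
  let d : Fin 2 → V → ℕ := fun i x => (𝒢.filter fun f => col f = i ∧ x ∈ f).card
  let D : V → ℕ := fun x => (𝒢.filter fun f => x ∈ f).card
  have hD : ∀ x, D x = d 0 x + d 1 x := by
    intro x
    simp only [D, d]
    rw [← Finset.card_union_of_disjoint]
    · congr 1
      ext f
      simp only [Finset.mem_filter, Finset.mem_union]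
      have : col f = 0 ∨ col f = 1 := by
        generalize col f = c
        fin_cases c <;> simp
      tauto
    · rw [Finset.disjoint_left]
      intro f h0 h1
      have h0 := (Finset.mem_filter.1 h0).2.1
      have h1 := (Finset.mem_filter.1 h1).2.1
      simp [h0] at h1
  -- The edges through `x` cover all other vertices.
  have hDn : ∀ x, n ≤ D x * (q + 1) + 1 := by
    intro x
    have h1 : (Finset.univ : Finset V).erase x ⊆
        (𝒢.filter fun f => x ∈ f).biUnion fun f => f.erase x := by
      intro y hy
      have hyx := Finset.ne_of_mem_erase hy
      obtain ⟨e, he, hxe, hye⟩ := hcov x y hyx.symm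
      exact Finset.mem_biUnion.2 ⟨e, by simp [he, hxe], by simp [hyx, hye]⟩
    have h2 := (Finset.card_le_card h1).trans (Finset.card_biUnion_le_card_mul _ _ (q + 1) (by
      intro f hf
      rw [Finset.mem_filter] at hf
      rw [Finset.card_erase_of_mem hf.2, hr f hf.1]
      omega))
    rw [Finset.card_erase_of_mem (Finset.mem_univ _), Finset.card_univ] at h2
    simp only [D]
    omega
  -- An edge `f ≠ g` meeting `g` does so in one vertex, and `g` itself contributes `r`.
  have hloc : ∀ g ∈ 𝒢, ∑ x ∈ g, d (col g) x ≤
      (𝒢.filter fun f => f ≠ g ∧ col f = col g ∧ (f ∩ g).Nonempty).card + (q + 2) := by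
    intro g hg
    have h1 : ∑ x ∈ g, d (col g) x = ∑ f ∈ 𝒢, if col f = col g then (f ∩ g).card else 0 := by
      simp only [d, Finset.card_filter]
      rw [Finset.sum_comm]
      refine Finset.sum_congr rfl fun f _ => ?_
      by_cases hc : col f = col g
      · simp only [hc, true_and, if_true, ← Finset.card_filter]
        rw [Finset.filter_mem_eq_inter, Finset.inter_comm]
      · simp [hc]
    have h2 : (q + 2) = ∑ f ∈ 𝒢, if f = g then (q + 2) else 0 := by
      rw [Finset.sum_ite_eq' 𝒢 g]
      simp [hg]
    rw [h1, h2, Finset.card_filter, ← Finset.sum_add_distrib]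
    refine Finset.sum_le_sum fun f hf => ?_
    by_cases hfg : f = g
    · subst hfg
      simp [hr f hf]
    · by_cases hc : col f = col g
      · have h3 := hlin f hf g hg hfg
        by_cases hne : (f ∩ g).Nonempty
        · simpa [hfg, hc, hne] using h3
        · rw [Finset.not_nonempty_iff_eq_empty] at hne
          simp [hne]
      · simp [hc]
  have hswap : ∀ F : Finset V → V → ℕ, ∑ g ∈ 𝒢, ∑ x ∈ g, F g x =
      ∑ x : V, ∑ g ∈ 𝒢 with x ∈ g, F g x := by
    intro F
    exact Finset.sum_comm' (by simp)
  have hsq : ∑ g ∈ 𝒢, ∑ x ∈ g, d (col g) x = ∑ x : V, (d 0 x ^ 2 + d 1 x ^ 2) := by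
    rw [hswap]
    refine Finset.sum_congr rfl fun x _ => ?_
    rw [← Finset.sum_fiberwise (s := 𝒢.filter fun g => x ∈ g) (g := col), Fin.sum_univ_two]
    have key : ∀ i : Fin 2, ∑ g ∈ (𝒢.filter fun g => x ∈ g) with col g = i, d (col g) x
        = d i x ^ 2 := by
      intro i
      rw [Finset.sum_congr rfl (g := fun _ => d i x)
        (fun g hg => by rw [(Finset.mem_filter.1 hg).2])]
      rw [Finset.sum_const, Finset.filter_filter, smul_eq_mul, sq]
      simp only [d, and_comm]
    rw [key, key]
  have hDsum : 𝒢.card * (q + 2) = ∑ x : V, D x := by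
    have h1 := hswap fun _ _ => 1
    simp only [Finset.sum_const, smul_eq_mul, mul_one] at h1
    rw [← h1, Finset.sum_congr rfl hr, Finset.sum_const, smul_eq_mul]
  set B := n + q * (k + (q + 2)) with hB
  have hupper : q * ∑ x : V, (d 0 x ^ 2 + d 1 x ^ 2) ≤ 𝒢.card * B := by
    rw [← hsq, Finset.mul_sum, ← smul_eq_mul, ← Finset.sum_const]
    refine Finset.sum_le_sum fun g hg => ?_
    have h1 := Nat.mul_le_mul_left q (hloc g hg)
    have h2 := hcon g hg
    rw [mul_add] at h1
    rw [hB, mul_add]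
    omega
  -- This is where `r ≥ 4` enters: `q (q + 2) > 2 (q + 1)` for `q ≥ 2`.
  have hbig : ∀ x, 2 * B < q * (q + 2) * D x := by
    intro x
    have h1 := hDn x
    have hlt : 2 * B * (q + 1) < q * (q + 2) * D x * (q + 1) := by
      obtain ⟨p, rfl⟩ := Nat.exists_eq_add_of_le hq
      set C := (2 + p) * (k + (2 + p + 2)) with hC
      obtain ⟨m, hm⟩ := Nat.exists_eq_add_of_lt hn
      have h2 : (2 + p) * (2 + p + 2) * n ≤
          (2 + p) * (2 + p + 2) * (D x * (2 + p + 1) + 1) := Nat.mul_le_mul_left _ h1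
      have h3 : 2 * B * (2 + p + 1) + (2 + p) * (2 + p + 2) < (2 + p) * (2 + p + 2) * n := by
        rw [hB, hm]
        nlinarith [Nat.zero_le (p * C), Nat.zero_le (p * p * C), Nat.zero_le (p * p * p * C),
          Nat.zero_le (p * m), Nat.zero_le (p * p * m), Nat.zero_le (p * p * p),
          Nat.zero_le (p * p), Nat.zero_le m, Nat.zero_le p, Nat.zero_le C]
      nlinarith
    exact lt_of_mul_lt_mul_right hlt (Nat.zero_le _)
  have hpos : ∀ x, 0 < D x := fun x => by
    have := hbig x
    exact Nat.pos_of_ne_zero fun h => by simp [h] at this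
  have hne : (Finset.univ : Finset V).Nonempty := by
    rw [← Finset.card_pos, Finset.card_univ]
    omega
  have hlower : ∑ x : V, 2 * B * D x <
      ∑ x : V, 2 * ((q + 2) * (q * (d 0 x ^ 2 + d 1 x ^ 2))) := by
    refine Finset.sum_lt_sum_of_nonempty hne fun x _ => ?_
    have h1 : D x ^ 2 ≤ 2 * (d 0 x ^ 2 + d 1 x ^ 2) := by
      rw [hD]
      exact add_sq_le
    calc 2 * B * D x < q * (q + 2) * D x * D x := Nat.mul_lt_mul_of_pos_right (hbig x) (hpos x)
      _ = q * (q + 2) * D x ^ 2 := by ring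
      _ ≤ q * (q + 2) * (2 * (d 0 x ^ 2 + d 1 x ^ 2)) := Nat.mul_le_mul_left _ h1
      _ = _ := by ring
  rw [← Finset.mul_sum, ← Finset.mul_sum, ← Finset.mul_sum, ← Finset.mul_sum, ← hDsum] at hlower
  have := Nat.mul_le_mul_left (2 * (q + 2)) hupper
  nlinarith

/-- For all `r ≥ 4` and `k ≥ 3` there is `n₀` such that every 2-colouring of a complete
linear `r`-graph on `n > n₀` vertices contains `k` hyperedges of the same colour spanned
by at most `(r-2)k + 3` vertices. -/
theorem stmt_19 (r k : ℕ) (hr : 4 ≤ r) (hk : 3 ≤ k) :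
    ∃ n₀ : ℕ, ∀ n : ℕ, n₀ < n → ∀ (V : Type) [DecidableEq V] [Fintype V],
      Fintype.card V = n → ∀ 𝒢 : Finset (Finset V),
        (∀ S ∈ 𝒢, S.card = r) →
        (∀ S ∈ 𝒢, ∀ T ∈ 𝒢, S ≠ T → (S ∩ T).card ≤ 1) →
        (∀ u v : V, u ≠ v → ∃ e ∈ 𝒢, u ∈ e ∧ v ∈ e) →
        ∀ col : Finset V → Fin 2,
          ∃ 𝒦 : Finset (Finset V), 𝒦 ⊆ 𝒢 ∧ 𝒦.card = k ∧
            (∃ i : Fin 2, ∀ e ∈ 𝒦, col e = i) ∧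
            (𝒦.sup id).card ≤ (r - 2) * k + 3 := by
  obtain ⟨q, rfl⟩ : ∃ q, r = q + 2 := ⟨r - 2, by omega⟩
  obtain ⟨j, rfl⟩ : ∃ j, k = j + 1 := ⟨k - 1, by omega⟩
  refine ⟨1 + (q + 1) * (1 + q * (j + (q + 2))), ?_⟩
  rintro n hn V _ _ rfl 𝒢 hcard hlin hcov col
  obtain ⟨g, hg, hG⟩ := exists_many_neighbours q j (by omega) hn 𝒢 hcard hlin hcov col
  set G := 𝒢.filter fun f => f ≠ g ∧ col f = col g ∧ (f ∩ g).Nonempty with hGdef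
  obtain ⟨H, hHG, hHj, hHu⟩ := exists_subfamily_card_biUnion_le (fun f => f \ g) q j (by omega) G
    (by
      intro f hf
      rw [hGdef, Finset.mem_filter] at hf
      have h1 := Finset.card_sdiff_add_card_inter f g
      have h2 := Finset.card_pos.2 hf.2.2.2
      have h3 := hcard f hf.1
      omega)
    (le_trans (Nat.add_le_add_right (Finset.card_le_univ _) _) hG)
  have hH : ∀ f ∈ H, f ∈ 𝒢 ∧ f ≠ g ∧ col f = col g := by
    intro f hf
    have h1 := hHG hf
    rw [hGdef, Finset.mem_filter] at h1
    exact ⟨h1.1, h1.2.1, h1.2.2.1⟩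
  have hgH : g ∉ H := fun h => (hH g h).2.1 rfl
  refine ⟨insert g H, ?_, ?_, ⟨col g, ?_⟩, ?_⟩
  · exact Finset.insert_subset hg fun f hf => (hH f hf).1
  · rw [Finset.card_insert_of_notMem hgH, hHj]
  · intro e he
    rcases Finset.mem_insert.1 he with rfl | he
    · rfl
    · exact (hH e he).2.2
  · have hsub : (insert g H).sup id ⊆ g ∪ H.biUnion fun f => f \ g := by
      intro x hx
      simp only [Finset.mem_sup, Finset.mem_insert, id] at hx
      obtain ⟨e, he, hxe⟩ := hx
      by_cases hxg : x ∈ g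
      · exact Finset.mem_union_left _ hxg
      · rcases he with rfl | he
        · exact absurd hxe hxg
        · exact Finset.mem_union_right _
            (Finset.mem_biUnion.2 ⟨e, he, Finset.mem_sdiff.2 ⟨hxe, hxg⟩⟩)
    have h1 := (Finset.card_le_card hsub).trans (Finset.card_union_le _ _)
    rw [hcard g hg] at h1
    rw [Nat.add_sub_cancel, mul_add]
    omega
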